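/- Let σ0 > 0, p ≥ 1 an integer, φ0 = γ_{0,σ0}, and let 0 < a < b ≤ +∞. Let ω be the p-optimal level of the interval [a, b) with respect to φ0 (the unique minimizer over [a,b] of ∫_a^b |t−λ|^p φ0(t) dt). Then ∫_a^b |t − ω|^p φ0(t) dt ≤ p!·σ0^{2p+2}·φ0(a)/a^{p+1}. -/

import Mathlib

/-!
By optimality of `ω` it suffices to bound the distortion at the level `a`, the left endpoint.
Expanding `s² = a² + 2a(s - a) + (s - a)²` and dropping the last square gives
`φ₀(s) ≤ φ₀(a) exp(-(a/σ₀²)(s - a))`. Enlarging the bin to `[a, ∞)` then leaves the Gamma integral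
`∫₀^∞ u^p exp(-ru) du = p! / r^(p+1)` with `r = a/σ₀²`.
-/

open MeasureTheory

/-- Centered Gaussian pdf of standard deviation σ. -/
noncomputable def gaussPdf (σ t : ℝ) : ℝ :=
  (2 * Real.pi * σ ^ 2) ^ (-(1:ℝ) / 2) * Real.exp (-(t ^ 2) / (2 * σ ^ 2))

theorem gaussPdf_nonneg (σ t : ℝ) : 0 ≤ gaussPdf σ t := by
  unfold gaussPdf; positivity

theorem gaussPdf_le_mul_exp {σ : ℝ} (hσ : 0 < σ) (a s : ℝ) :
    gaussPdf σ s ≤ gaussPdf σ a * Real.exp (-(a / σ ^ 2 * (s - a))) := by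
  unfold gaussPdf
  rw [mul_assoc _ (Real.exp _), ← Real.exp_add]
  have h : -(s ^ 2) / (2 * σ ^ 2) ≤ -(a ^ 2) / (2 * σ ^ 2) + -(a / σ ^ 2 * (s - a)) := by
    have e : -(a ^ 2) / (2 * σ ^ 2) + -(a / σ ^ 2 * (s - a))
        = -(s ^ 2) / (2 * σ ^ 2) + (s - a) ^ 2 / (2 * σ ^ 2) := by
      field_simp; ring
    rw [e]
    have : 0 ≤ (s - a) ^ 2 / (2 * σ ^ 2) := by positivity
    linarith
  gcongr

theorem integral_pow_mul_exp_Ioi {r : ℝ} (hr : 0 < r) (p : ℕ) :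
    ∫ u in Set.Ioi (0:ℝ), |u| ^ p * Real.exp (-(r * u)) = (p.factorial : ℝ) / r ^ (p + 1) := by
  have h := Real.integral_rpow_mul_exp_neg_mul_Ioi (a := (p:ℝ) + 1) (r := r) (by positivity) hr
  rw [Real.Gamma_nat_eq_factorial] at h
  have e : (1 / r) ^ ((p:ℝ) + 1) * (p.factorial : ℝ) = (p.factorial : ℝ) / r ^ (p + 1) := by
    rw [← Nat.cast_succ, Real.rpow_natCast, one_div, inv_pow]; field_simp
  rw [← e, ← h]
  refine setIntegral_congr_fun measurableSet_Ioi fun u hu => ?_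
  simp [abs_of_pos (Set.mem_Ioi.1 hu)]

/-- The exponential majorant of the distortion at level `a`, integrated over `[a, ∞)`. -/
theorem integral_shift {r : ℝ} (hr : 0 < r) (p : ℕ) (a : ℝ) :
    ∫ s in Set.Ici a, |s - a| ^ p * Real.exp (-(r * (s - a)))
      = (p.factorial : ℝ) / r ^ (p + 1) := by
  rw [integral_Ici_eq_integral_Ioi, ← integral_pow_mul_exp_Ioi hr p,
    ← (measurePreserving_sub_right volume a).setIntegral_preimage_emb
      (MeasurableEquiv.subRight a).measurableEmbedding
      (fun u => |u| ^ p * Real.exp (-(r * u))) (Set.Ioi 0)]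
  simp

theorem tail_bin_distortion_bound
    (σ0 : ℝ) (hσ0 : 0 < σ0) (p : ℕ) (hp : 1 ≤ p)
    (a : ℝ) (ha : 0 < a) (b : EReal) (hab : (a : EReal) < b)
    (I : Set ℝ) (hI : I = {s : ℝ | a ≤ s ∧ (s : EReal) < b})
    (ω : ℝ) (hmem : ω ∈ closure I)
    (hopt : ∀ lam ∈ closure I,
      ∫ s in I, |s - ω| ^ p * gaussPdf σ0 s ≤ ∫ s in I, |s - lam| ^ p * gaussPdf σ0 s) :
    ∫ s in I, |s - ω| ^ p * gaussPdf σ0 s ≤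
      (p.factorial : ℝ) * σ0 ^ (2 * p + 2) * gaussPdf σ0 a / a ^ (p + 1) := by
  have haI : a ∈ I := by rw [hI]; exact ⟨le_rfl, hab⟩
  have hsub : I ⊆ Set.Ici a := by rw [hI]; exact fun s hs => hs.1
  refine (hopt a (subset_closure haI)).trans ?_
  have hr : 0 < a / σ0 ^ 2 := by positivity
  set r := a / σ0 ^ 2 with hrdef
  have hval := integral_shift hr p a
  -- A Bochner integral with nonzero value forces integrability.
  have hint : IntegrableOn (fun s => |s - a| ^ p * Real.exp (-(r * (s - a)))) (Set.Ici a) := by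
    refine Integrable.of_integral_ne_zero ?_
    rw [hval]; positivity
  have hint' := hint.const_mul (gaussPdf σ0 a)
  calc ∫ s in I, |s - a| ^ p * gaussPdf σ0 s
      ≤ ∫ s in I, gaussPdf σ0 a * (|s - a| ^ p * Real.exp (-(r * (s - a)))) := by
        refine integral_mono_of_nonneg
          (Filter.Eventually.of_forall fun s => mul_nonneg (by positivity) (gaussPdf_nonneg _ _))
          (IntegrableOn.mono_set hint' hsub) (Filter.Eventually.of_forall fun s => ?_)
        have := mul_le_mul_of_nonneg_left (gaussPdf_le_mul_exp hσ0 a s)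
          (by positivity : 0 ≤ |s - a| ^ p)
        exact this.trans_eq (by ring)
    _ ≤ ∫ s in Set.Ici a, gaussPdf σ0 a * (|s - a| ^ p * Real.exp (-(r * (s - a)))) :=
        setIntegral_mono_set hint'
          (Filter.Eventually.of_forall fun s => mul_nonneg (gaussPdf_nonneg _ _) (by positivity))
          hsub.eventuallyLE
    _ = (p.factorial : ℝ) * σ0 ^ (2 * p + 2) * gaussPdf σ0 a / a ^ (p + 1) := by
        rw [integral_const_mul, hval, hrdef, div_pow, ← pow_mul]
        field_simp
        ring
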